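/- Sampled simplifications give approximate medians for every large subset (clustering candidates, O((mℓ)^{1/p}) factor): let (X,ρ) be a metric space, let T be a set of n point sequences over X, each of complexity at most m, let β > 1, p ∈ [1,∞), δ ∈ (0,1), and 2 ≤ ℓ ≤ m. Fix a subset T' ⊆ T with |T'| ≥ |T|/β. Let S be a multiset of ⌈ 2β·log₂(2/δ) ⌉ point sequences sampled from T uniformly and independently at random with replacement, and let C be the set of fixed (2,ℓ)-simplifications under dtw_p of the sequences in S. Then with probability at least 1−δ, there exists τ' ∈ C such that cost_p^1(T', τ') ≤ 8 · m^{1/p} · ℓ^{1/p} · min_{c ∈ X^{≤ℓ}} cost_p^1(T', c). -/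

import Mathlib

open scoped BigOperators

/-- An `(m₁, m₂)`-warping (with 0-based indices): a sequence of index pairs starting at
`(0,0)`, ending at `(m₁-1, m₂-1)`, whose consecutive increments lie in
`{(0,1), (1,0), (1,1)}`. -/
def IsWarping (m₁ m₂ : ℕ) (W : List (ℕ × ℕ)) : Prop :=
  W ≠ [] ∧ W.head? = some (0, 0) ∧ W.getLast? = some (m₁ - 1, m₂ - 1) ∧
    ∀ k, k + 1 < W.length →
      W.getD (k + 1) (0, 0) = ((W.getD k (0, 0)).1, (W.getD k (0, 0)).2 + 1) ∨
      W.getD (k + 1) (0, 0) = ((W.getD k (0, 0)).1 + 1, (W.getD k (0, 0)).2) ∨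
      W.getD (k + 1) (0, 0) = ((W.getD k (0, 0)).1 + 1, (W.getD k (0, 0)).2 + 1)

/-- The cost `Σ_{(i,j) ∈ W} ρ(σ_i, τ_j)^p` of a warping `W`. -/
noncomputable def warpCost {X : Type*} [MetricSpace X] [Inhabited X]
    (p : ℝ) (σ τ : List X) (W : List (ℕ × ℕ)) : ℝ :=
  (W.map fun ij => dist (σ.getD ij.1 default) (τ.getD ij.2 default) ^ p).sum

/-- The `p`-dynamic time warping distance between two point sequences. -/
noncomputable def dtw {X : Type*} [MetricSpace X] [Inhabited X] (p : ℝ) (σ τ : List X) : ℝ :=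
  sInf { c : ℝ | ∃ W, IsWarping σ.length τ.length W ∧ c = warpCost p σ τ W ^ (1 / p) }

/-- `cost_p^q(T, c) = Σ_{τ ∈ T} dtw_p(c, τ)^q`. -/
noncomputable def dtwCost {X : Type*} [MetricSpace X] [Inhabited X]
    (p q : ℝ) (T : Finset (List X)) (c : List X) : ℝ :=
  ∑ τ ∈ T, dtw p c τ ^ q

/-- `σ` is a point sequence of complexity at most `ℓ`, i.e. `σ ∈ X^{≤ℓ}`. -/
def SeqLE {X : Type*} (ℓ : ℕ) (σ : List X) : Prop := 2 ≤ σ.length ∧ σ.length ≤ ℓ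

/-!
Let `W₁`, `W₂` be warpings between `σ, τ` and `τ, υ`. They compose to a warping `W` between `σ, υ`
each of whose pairs `(i, k)` factors as `(i, j) ∈ W₁`, `(j, k) ∈ W₂`. Minkowski's inequality along
`W` then gives the weak triangle inequality
`dtw σ υ ≤ |υ|^{1/p} dtw σ τ + |σ|^{1/p} dtw τ υ`.

For a center `c`, at least half of the `τ ∈ T'` have distance at most twice the average to `c`, by
Markov's inequality. Two applications of the weak triangle inequality show that the simplification
of such a `τ` costs at most `7 (mℓ)^{1/p}` times as much as `c`. An optimal center need not exist,
but the sets of `τ` whose simplification competes with a given `c` are nested, so the smallest of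
them competes with all centers at once. Hence a sample hits a good `τ` with probability at least
`1 / (2β)`, and `N` samples all miss with probability at most `exp (-N / (2β))`.
-/

open scoped Finset SetRel

theorem sum_comp_le_card_mul_sum {ι κ μ : Type*} {s : Finset ι} {t : Finset κ} {u : Finset μ}
    {g : ι → κ} {h : ι → μ} (hg : ∀ x ∈ s, g x ∈ t) (hh : ∀ x ∈ s, h x ∈ u)
    (hinj : Set.InjOn (fun x => (g x, h x)) s) {f : κ → ℝ} (hf : ∀ y ∈ t, 0 ≤ f y) :
    ∑ x ∈ s, f (g x) ≤ #u * ∑ y ∈ t, f y := by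
  classical
  calc ∑ x ∈ s, f (g x)
      = ∑ z ∈ s.image fun x => (g x, h x), f z.1 :=
        (Finset.sum_image (f := fun z => f z.1) hinj).symm
    _ ≤ ∑ z ∈ t ×ˢ u, f z.1 := by
        refine Finset.sum_le_sum_of_subset_of_nonneg (Finset.image_subset_iff.2 fun x hx => ?_)
          fun z hz _ => hf _ (Finset.mem_product.1 hz).1
        exact Finset.mem_product.2 ⟨hg x hx, hh x hx⟩
    _ = #u * ∑ y ∈ t, f y := by
        simp only [Finset.sum_product, Finset.sum_const, nsmul_eq_mul, Finset.mul_sum]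

theorem mul_card_filter_lt_le_card {ι : Type*} {s : Finset ι} {f : ι → ℝ}
    (hf : ∀ x ∈ s, 0 ≤ f x) (k : ℝ) :
    k * #{x ∈ s | k * ∑ y ∈ s, f y < #s * f x} ≤ #s := by
  set S := ∑ y ∈ s, f y
  set B := {x ∈ s | k * S < #s * f x}
  obtain hB | hB := B.eq_empty_or_nonempty
  · simp [hB]
  have hlt : k * #B * S < #s * S :=
    calc k * #B * S = ∑ _x ∈ B, k * S := by rw [Finset.sum_const, nsmul_eq_mul]; ring
      _ < ∑ x ∈ B, #s * f x :=
        Finset.sum_lt_sum_of_nonempty hB fun x hx => (Finset.mem_filter.1 hx).2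
      _ ≤ #s * S := by
        rw [← Finset.mul_sum]
        gcongr
        exact Finset.sum_le_sum_of_subset_of_nonneg (Finset.filter_subset _ _) fun x hx _ => hf x hx
  exact (lt_of_mul_lt_mul_right hlt (Finset.sum_nonneg hf)).le

theorem card_le_two_mul_card_filter_le {ι : Type*} {s : Finset ι} {f : ι → ℝ}
    (hf : ∀ x ∈ s, 0 ≤ f x) :
    #s ≤ 2 * #{x ∈ s | #s * f x ≤ 2 * ∑ y ∈ s, f y} := by
  have hmarkov : 2 * #{x ∈ s | 2 * ∑ y ∈ s, f y < #s * f x} ≤ #s := by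
    exact_mod_cast mul_card_filter_lt_le_card hf 2
  have hsplit := s.card_filter_add_card_filter_not fun x => #s * f x ≤ 2 * ∑ y ∈ s, f y
  simp only [not_le] at hsplit
  lia

-- For the `x` of least `g x` that fails some threshold `v c`, the set `{g ≤ v c}` avoids every
-- failing element, hence is contained in the set on the right.
theorem exists_filter_subset_filter_forall {ι α β : Type*} [LinearOrder β] (s : Finset α)
    (g : α → β) (C : Set ι) (v : ι → β) [DecidablePred fun x => ∀ c ∈ C, g x ≤ v c]
    (hs : {x ∈ s | ∀ c ∈ C, g x ≤ v c} ≠ s) :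
    ∃ c ∈ C, {x ∈ s | g x ≤ v c} ⊆ {x ∈ s | ∀ c ∈ C, g x ≤ v c} := by
  obtain ⟨x₀, hx₀⟩ : {x ∈ s | ¬ ∀ c ∈ C, g x ≤ v c}.Nonempty := by
    rw [Finset.nonempty_iff_ne_empty]
    simpa [Finset.filter_eq_empty_iff, Finset.filter_eq_self] using hs
  obtain ⟨x, hx, hmin⟩ := Finset.exists_min_image _ g ⟨x₀, hx₀⟩
  obtain ⟨-, hfail⟩ := Finset.mem_filter.1 hx
  push Not at hfail
  obtain ⟨c, hc, hlt⟩ := hfail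
  refine ⟨c, hc, fun y hy => ?_⟩
  obtain ⟨hys, hyc⟩ := Finset.mem_filter.1 hy
  by_contra hbad
  exact (hyc.trans_lt hlt).not_ge (hmin y (by simp_all))

theorem ncard_setOf_exists_mem_add {ι Ω : Type*} [Finite ι] [Finite Ω] (A : Set Ω) :
    {s : ι → Ω | ∃ i, s i ∈ A}.ncard + Aᶜ.ncard ^ Nat.card ι = Nat.card Ω ^ Nat.card ι := by
  have hmiss : {s : ι → Ω | ∃ i, s i ∈ A}ᶜ.ncard = Aᶜ.ncard ^ Nat.card ι := by
    rw [← Nat.card_coe_set_eq Aᶜ, ← Nat.card_fun, ← Nat.card_coe_set_eq]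
    exact Nat.card_congr <| (Equiv.subtypeEquivRight (by simp)).trans
      (Equiv.subtypePiEquivPi (p := fun _ a => a ∈ Aᶜ))
  rw [← hmiss, Set.ncard_add_ncard_compl, Nat.card_fun]

theorem one_sub_exp_mul_card_pow_le_ncard {ι Ω : Type*} [Finite ι] [Finite Ω] {A : Set Ω} {θ : ℝ}
    (hA : θ * Nat.card Ω ≤ A.ncard) :
    (1 - Real.exp (-(θ * Nat.card ι))) * (Nat.card Ω : ℝ) ^ Nat.card ι ≤
      {s : ι → Ω | ∃ i, s i ∈ A}.ncard := by
  have hcompl : (Aᶜ.ncard : ℝ) ≤ Real.exp (-θ) * Nat.card Ω :=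
    calc (Aᶜ.ncard : ℝ) = Nat.card Ω - A.ncard := by
          rw [← Set.ncard_add_ncard_compl A, Nat.cast_add, add_sub_cancel_left]
      _ ≤ (1 - θ) * Nat.card Ω := by linarith
      _ ≤ Real.exp (-θ) * Nat.card Ω := by gcongr; exact Real.one_sub_le_exp_neg θ
  have hpow : (Aᶜ.ncard : ℝ) ^ Nat.card ι ≤
      Real.exp (-(θ * Nat.card ι)) * (Nat.card Ω : ℝ) ^ Nat.card ι :=
    calc (Aᶜ.ncard : ℝ) ^ Nat.card ι ≤ (Real.exp (-θ) * Nat.card Ω) ^ Nat.card ι := by gcongr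
      _ = _ := by rw [mul_pow, ← Real.exp_nat_mul, mul_neg, mul_comm θ]
  have hsplit : ({s : ι → Ω | ∃ i, s i ∈ A}.ncard : ℝ) + (Aᶜ.ncard : ℝ) ^ Nat.card ι =
      (Nat.card Ω : ℝ) ^ Nat.card ι := by
    exact_mod_cast ncard_setOf_exists_mem_add A
  linarith

theorem log_inv_le_logb_two_div {δ : ℝ} (hδ₀ : 0 < δ) (hδ₁ : δ ≤ 1) :
    Real.log δ⁻¹ ≤ Real.logb 2 (2 / δ) :=
  have hδ : 1 ≤ δ⁻¹ := (one_le_inv₀ hδ₀).2 hδ₁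
  calc Real.log δ⁻¹ ≤ Real.log δ⁻¹ / Real.log 2 :=
        le_div_self (Real.log_nonneg hδ) (Real.log_pos one_lt_two)
          (Real.log_two_lt_d9.le.trans (by norm_num))
    _ = Real.logb 2 δ⁻¹ := Real.log_div_log
    _ ≤ Real.logb 2 (2 / δ) := by
        rw [inv_eq_one_div]
        exact Real.logb_le_logb_of_le one_lt_two (by positivity) (by gcongr; exact one_le_two)

/-- The admissible increments `(0,1)`, `(1,0)`, `(1,1)` of a warping. -/
def WarpStep (a b : ℕ × ℕ) : Prop :=
  b = (a.1, a.2 + 1) ∨ b = (a.1 + 1, a.2) ∨ b = (a.1 + 1, a.2 + 1)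

theorem WarpStep.lt {a b : ℕ × ℕ} (h : WarpStep a b) : a < b := by
  rcases h with rfl | rfl | rfl <;> simp [Prod.lt_iff]

theorem WarpStep.swap {a b : ℕ × ℕ} (h : WarpStep a b) : WarpStep a.swap b.swap := by
  rcases h with rfl | rfl | rfl <;> simp [WarpStep]

theorem isWarping_iff {m₁ m₂ : ℕ} {W : List (ℕ × ℕ)} :
    IsWarping m₁ m₂ W ↔ W.IsChain WarpStep ∧
      W.head? = some (0, 0) ∧ W.getLast? = some (m₁ - 1, m₂ - 1) := by
  have hchain : W.IsChain WarpStep ↔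
      ∀ k, k + 1 < W.length → WarpStep (W.getD k (0, 0)) (W.getD (k + 1) (0, 0)) := by
    rw [List.isChain_iff_getElem]
    refine forall₂_congr fun k hk => ?_
    rw [List.getD_eq_getElem _ _ hk, List.getD_eq_getElem _ _ (Nat.lt_of_succ_lt hk)]
  rw [hchain]
  refine ⟨fun ⟨_, hhead, hlast, hsteps⟩ => ⟨hsteps, hhead, hlast⟩,
    fun ⟨hsteps, hhead, hlast⟩ => ⟨?_, hhead, hlast, hsteps⟩⟩
  rintro rfl
  cases hhead

namespace IsWarping

variable {m₁ m₂ : ℕ} {W : List (ℕ × ℕ)}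

theorem sortedLT (h : IsWarping m₁ m₂ W) : W.SortedLT :=
  ((isWarping_iff.1 h).1.imp fun _ _ => WarpStep.lt).sortedLT

theorem le_last (h : IsWarping m₁ m₂ W) {x : ℕ × ℕ} (hx : x ∈ W) : x ≤ (m₁ - 1, m₂ - 1) := by
  have hle := h.sortedLT.sortedLE.pairwise.rel_getLast hx
  rwa [List.getLast_of_mem_getLast? h.2.2.1] at hle

theorem swap (h : IsWarping m₁ m₂ W) : IsWarping m₂ m₁ (W.map Prod.swap) := by
  obtain ⟨hchain, hhead, hlast⟩ := isWarping_iff.1 h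
  exact isWarping_iff.2 ⟨List.isChain_map_of_isChain Prod.swap (fun _ _ => WarpStep.swap) hchain,
    by simp [hhead], by simp [hlast]⟩

end IsWarping

/-- `WarpReachable R i j` says that `(i, j)` is the endpoint of a path from `(0, 0)` with
increments `(0,1)`, `(1,0)`, `(1,1)` all of whose pairs lie in `R`. -/
inductive WarpReachable (R : SetRel ℕ ℕ) : ℕ → ℕ → Prop
  | zero : (0, 0) ∈ R → WarpReachable R 0 0
  | right {i j} : WarpReachable R i j → (i, j + 1) ∈ R → WarpReachable R i (j + 1)
  | down {i j} : WarpReachable R i j → (i + 1, j) ∈ R → WarpReachable R (i + 1) j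
  | diag {i j} : WarpReachable R i j → (i + 1, j + 1) ∈ R → WarpReachable R (i + 1) (j + 1)

namespace WarpReachable

variable {R S : SetRel ℕ ℕ} {i j : ℕ}

theorem mem (h : WarpReachable R i j) : (i, j) ∈ R := by
  cases h <;> assumption

theorem snoc {b : ℕ × ℕ} (h : WarpReachable R i j) (hb : WarpStep (i, j) b) (hbR : b ∈ R) :
    WarpReachable R b.1 b.2 := by
  rcases hb with rfl | rfl | rfl
  exacts [h.right hbR, h.down hbR, h.diag hbR]

theorem univ (i j : ℕ) : WarpReachable Set.univ i j := by
  induction i with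
  | zero =>
    induction j with
    | zero => exact .zero trivial
    | succ j ih => exact ih.right trivial
  | succ i ih => exact ih.down trivial

theorem exists_isChain (h : WarpReachable R i j) : ∃ W : List (ℕ × ℕ), W.IsChain WarpStep ∧
    W.head? = some (0, 0) ∧ W.getLast? = some (i, j) ∧ ∀ x ∈ W, x ∈ R := by
  induction h with
  | zero h => exact ⟨[(0, 0)], by simp [h]⟩
  | right _ hR ih | down _ hR ih | diag _ hR ih =>
    obtain ⟨W, hchain, hhead, hlast, hW⟩ := ih
    refine ⟨W ++ [_], hchain.append (.singleton _) ?_, by simp [hhead], List.getLast?_concat, ?_⟩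
    · simp [hlast, WarpStep]
    · simpa [or_imp, forall_and, hR] using fun a b => hW (a, b)

theorem exists_isWarping {m₁ m₂ : ℕ} (h : WarpReachable R (m₁ - 1) (m₂ - 1)) :
    ∃ W, IsWarping m₁ m₂ W ∧ ∀ x ∈ W, x ∈ R := by
  obtain ⟨W, hchain, hhead, hlast, hW⟩ := h.exists_isChain
  exact ⟨W, isWarping_iff.2 ⟨hchain, hhead, hlast⟩, hW⟩

-- The last steps into the shared index `j` decide which path to shorten; if both enter `j` from
-- `j - 1`, both are shortened and the composite advances along whichever outer index moved.
theorem comp {i j k : ℕ} :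
    WarpReachable R i j → WarpReachable S j k → WarpReachable (R ○ S) i k
  | .zero h₁, .zero h₂ => .zero ⟨0, h₁, h₂⟩
  | .down h₁ hR, h₂ => (h₁.comp h₂).down ⟨j, hR, h₂.mem⟩
  | h₁, .right h₂ hS => (h₁.comp h₂).right ⟨j, h₁.mem, hS⟩
  | .right h₁ _, .down h₂ _ => h₁.comp h₂
  | .right h₁ hR, .diag h₂ hS => (h₁.comp h₂).right ⟨_, hR, hS⟩
  | .diag h₁ hR, .down h₂ hS => (h₁.comp h₂).down ⟨_, hR, hS⟩
  | .diag h₁ hR, .diag h₂ hS => (h₁.comp h₂).diag ⟨_, hR, hS⟩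
termination_by i + j + k

end WarpReachable

theorem IsWarping.warpReachable {m₁ m₂ : ℕ} {W : List (ℕ × ℕ)} (h : IsWarping m₁ m₂ W) :
    WarpReachable {x | x ∈ W} (m₁ - 1) (m₂ - 1) := by
  obtain ⟨hchain, hhead, hlast⟩ := isWarping_iff.1 h
  have hchain' : W.IsChain fun a b => WarpStep a b ∧ b ∈ W := by
    rw [List.isChain_iff_getElem] at hchain ⊢
    exact fun k hk => ⟨hchain k hk, List.getElem_mem hk⟩
  refine hchain'.induction (fun x => WarpReachable {x | x ∈ W} x.1 x.2) W
    (fun a b hab ha => ha.snoc hab.1 hab.2) (fun hne => ?_) _ (List.mem_of_getLast? hlast)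
  rw [(List.head_eq_iff_head?_eq_some hne).2 hhead]
  exact .zero (List.mem_of_head? hhead)

theorem IsWarping.exists_comp {m₁ m₂ m₃ : ℕ} {W₁ W₂ : List (ℕ × ℕ)}
    (h₁ : IsWarping m₁ m₂ W₁) (h₂ : IsWarping m₂ m₃ W₂) :
    ∃ W, IsWarping m₁ m₃ W ∧ ∀ x ∈ W, ∃ j, (x.1, j) ∈ W₁ ∧ (j, x.2) ∈ W₂ :=
  (h₁.warpReachable.comp h₂.warpReachable).exists_isWarping

theorem SeqLE.ne_nil {X : Type*} {ℓ : ℕ} {σ : List X} (h : SeqLE ℓ σ) : σ ≠ [] :=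
  List.ne_nil_of_length_pos (two_pos.trans_le h.1)

section DynamicTimeWarping

variable {X : Type*} [MetricSpace X] [Inhabited X] {p : ℝ}

theorem warpCost_nonneg (p : ℝ) (σ τ : List X) (W : List (ℕ × ℕ)) : 0 ≤ warpCost p σ τ W :=
  List.sum_nonneg <| List.forall_mem_map.2 fun _ _ => Real.rpow_nonneg dist_nonneg p

theorem warpCost_map_swap (p : ℝ) (σ τ : List X) (W : List (ℕ × ℕ)) :
    warpCost p σ τ (W.map Prod.swap) = warpCost p τ σ W := by
  simp only [warpCost, List.map_map, Function.comp_def, Prod.fst_swap, Prod.snd_swap, dist_comm]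

theorem warpCost_eq_sum_toFinset (p : ℝ) (σ τ : List X) {W : List (ℕ × ℕ)} (hW : W.Nodup) :
    warpCost p σ τ W =
      ∑ x ∈ W.toFinset, dist (σ.getD x.1 default) (τ.getD x.2 default) ^ p :=
  (List.sum_toFinset _ hW).symm

theorem sum_dist_rpow_comp_le (p : ℝ) (σ τ : List X) {W W' : List (ℕ × ℕ)} (hW' : W'.Nodup)
    {g : ℕ × ℕ → ℕ × ℕ} {h : ℕ × ℕ → ℕ} {n : ℕ} (hg : ∀ x ∈ W, g x ∈ W') (hh : ∀ x ∈ W, h x < n)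
    (hinj : Function.Injective fun x => (g x, h x)) :
    ∑ x ∈ W.toFinset, dist (σ.getD (g x).1 default) (τ.getD (g x).2 default) ^ p ≤
      n * warpCost p σ τ W' := by
  rw [warpCost_eq_sum_toFinset p σ τ hW', ← Finset.card_range n]
  exact sum_comp_le_card_mul_sum
    (f := fun y => dist (σ.getD y.1 default) (τ.getD y.2 default) ^ p)
    (by simpa using hg) (by simpa using hh) hinj.injOn fun _ _ => Real.rpow_nonneg dist_nonneg p

-- Minkowski's inequality along `W`; a pair of `W₁` is used at most once for each index of `υ`,
-- and a pair of `W₂` at most once for each index of `σ`.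
theorem warpCost_rpow_le_add {σ τ υ : List X} (hp : 1 ≤ p) (hσ : σ ≠ []) (hυ : υ ≠ [])
    {W₁ W₂ W : List (ℕ × ℕ)} (h₁ : W₁.Nodup) (h₂ : W₂.Nodup)
    (hW : IsWarping σ.length υ.length W)
    (hcomp : ∀ x ∈ W, ∃ j, (x.1, j) ∈ W₁ ∧ (j, x.2) ∈ W₂) :
    warpCost p σ υ W ^ (1 / p) ≤ (υ.length : ℝ) ^ (1 / p) * warpCost p σ τ W₁ ^ (1 / p) +
      (σ.length : ℝ) ^ (1 / p) * warpCost p τ υ W₂ ^ (1 / p) := by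
  choose! J hJ₁ hJ₂ using hcomp
  let F : ℕ × ℕ → ℝ := fun x => dist (σ.getD x.1 default) (τ.getD (J x) default)
  let G : ℕ × ℕ → ℝ := fun x => dist (τ.getD (J x) default) (υ.getD x.2 default)
  have hF (x) : 0 ≤ F x := dist_nonneg
  have hG (x) : 0 ≤ G x := dist_nonneg
  have hcost₁ : ∑ x ∈ W.toFinset, F x ^ p ≤ υ.length * warpCost p σ τ W₁ :=
    sum_dist_rpow_comp_le p σ τ h₁ (g := fun x => (x.1, J x)) (h := Prod.snd) hJ₁
      (fun x hx => (hW.le_last hx).2.trans_lt (Nat.sub_one_lt (by simpa using hυ)))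
      fun _ _ hxy => Prod.ext (congrArg (·.1.1) hxy) (congrArg (·.2) hxy)
  have hcost₂ : ∑ x ∈ W.toFinset, G x ^ p ≤ σ.length * warpCost p τ υ W₂ :=
    sum_dist_rpow_comp_le p τ υ h₂ (g := fun x => (J x, x.2)) (h := Prod.fst) hJ₂
      (fun x hx => (hW.le_last hx).1.trans_lt (Nat.sub_one_lt (by simpa using hσ)))
      fun _ _ hxy => Prod.ext (congrArg (·.2) hxy) (congrArg (·.1.2) hxy)
  calc warpCost p σ υ W ^ (1 / p)
      ≤ (∑ x ∈ W.toFinset, (F x + G x) ^ p) ^ (1 / p) := by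
        rw [warpCost_eq_sum_toFinset p σ υ hW.sortedLT.nodup]
        gcongr
        exact dist_triangle _ _ _
    _ ≤ (∑ x ∈ W.toFinset, F x ^ p) ^ (1 / p) + (∑ x ∈ W.toFinset, G x ^ p) ^ (1 / p) :=
        Real.Lp_add_le_of_nonneg _ hp (fun _ _ => hF _) fun _ _ => hG _
    _ ≤ (υ.length * warpCost p σ τ W₁) ^ (1 / p) +
          (σ.length * warpCost p τ υ W₂) ^ (1 / p) := by gcongr
    _ = _ := by
        rw [Real.mul_rpow (by positivity) (warpCost_nonneg ..),
          Real.mul_rpow (by positivity) (warpCost_nonneg ..)]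

theorem dtw_eq_iInf (p : ℝ) (σ τ : List X) :
    dtw p σ τ =
      ⨅ W : {W // IsWarping σ.length τ.length W}, warpCost p σ τ W ^ (1 / p) := by
  rw [dtw, iInf]
  congr 1
  ext c
  simp [eq_comm]

theorem dtw_nonneg (p : ℝ) (σ τ : List X) : 0 ≤ dtw p σ τ := by
  rw [dtw_eq_iInf]
  exact Real.iInf_nonneg fun W => Real.rpow_nonneg (warpCost_nonneg ..) _

theorem dtw_le {σ τ : List X} {W : List (ℕ × ℕ)} (hW : IsWarping σ.length τ.length W) :
    dtw p σ τ ≤ warpCost p σ τ W ^ (1 / p) := by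
  rw [dtw_eq_iInf]
  exact ciInf_le ⟨0, Set.forall_mem_range.2 fun _ => Real.rpow_nonneg (warpCost_nonneg ..) _⟩
    (⟨W, hW⟩ : {W // IsWarping σ.length τ.length W})

instance nonempty_warping (m₁ m₂ : ℕ) : Nonempty {W // IsWarping m₁ m₂ W} :=
  let ⟨W, hW, _⟩ := (WarpReachable.univ (m₁ - 1) (m₂ - 1)).exists_isWarping
  ⟨W, hW⟩

theorem dtw_comm (p : ℝ) (σ τ : List X) : dtw p σ τ = dtw p τ σ := by
  have dtw_le_swap (σ τ : List X) : dtw p σ τ ≤ dtw p τ σ := by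
    rw [dtw_eq_iInf p τ σ]
    refine le_ciInf fun W => (dtw_le W.2.swap).trans_eq ?_
    rw [warpCost_map_swap]
  exact (dtw_le_swap σ τ).antisymm (dtw_le_swap τ σ)

theorem dtw_le_add {σ υ : List X} (hp : 1 ≤ p) (hσ : σ ≠ []) (hυ : υ ≠ []) (τ : List X) :
    dtw p σ υ ≤ (υ.length : ℝ) ^ (1 / p) * dtw p σ τ +
      (σ.length : ℝ) ^ (1 / p) * dtw p τ υ := by
  rw [dtw_eq_iInf p σ τ, dtw_eq_iInf p τ υ, Real.mul_iInf_of_nonneg (by positivity),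
    Real.mul_iInf_of_nonneg (by positivity)]
  refine le_ciInf_add_ciInf fun W₁ W₂ => ?_
  obtain ⟨W, hW, hcomp⟩ := W₁.2.exists_comp W₂.2
  exact (dtw_le hW).trans <|
    warpCost_rpow_le_add hp hσ hυ W₁.2.sortedLT.nodup W₂.2.sortedLT.nodup hW hcomp

theorem dtw_le_add_of_seqLE {a b : ℕ} {σ υ : List X} (hp : 1 ≤ p) (hσ : SeqLE a σ)
    (hυ : SeqLE b υ) (τ : List X) :
    dtw p σ υ ≤ (b : ℝ) ^ (1 / p) * dtw p σ τ + (a : ℝ) ^ (1 / p) * dtw p τ υ := by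
  refine (dtw_le_add hp hσ.ne_nil hυ.ne_nil τ).trans ?_
  gcongr
  exacts [dtw_nonneg .., hυ.2, dtw_nonneg .., hσ.2]

theorem dtwCost_one (p : ℝ) (T : Finset (List X)) (c : List X) :
    dtwCost p 1 T c = ∑ τ ∈ T, dtw p c τ := by
  simp only [dtwCost, Real.rpow_one]

theorem dtwCost_nonneg (p q : ℝ) (T : Finset (List X)) (c : List X) : 0 ≤ dtwCost p q T c :=
  Finset.sum_nonneg fun _ _ => Real.rpow_nonneg (dtw_nonneg ..) q

/-- `s` is an `(α, ℓ)`-simplification of `τ` under `dtw p`. -/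
def IsSimplification (p α : ℝ) (ℓ : ℕ) (τ s : List X) : Prop :=
  SeqLE ℓ s ∧ ∀ π : List X, SeqLE ℓ π → dtw p τ s ≤ α * dtw p τ π

/-- `s` is a `κ`-approximate `ℓ`-median of `T` under `dtw p`: its cost is at most `κ` times that of
any center of complexity at most `ℓ`. The complexity of `s` itself is not restricted. -/
def IsApproxMedian (p : ℝ) (ℓ : ℕ) (T : Finset (List X)) (κ : ℝ) (s : List X) : Prop :=
  ∀ c : List X, SeqLE ℓ c → dtwCost p 1 T s ≤ κ * dtwCost p 1 T c

theorem IsApproxMedian.mono {ℓ : ℕ} {T : Finset (List X)} {κ κ' : ℝ} {s : List X}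
    (hs : IsApproxMedian p ℓ T κ s) (hκ : κ ≤ κ') : IsApproxMedian p ℓ T κ' s :=
  fun c hc => (hs c hc).trans (mul_le_mul_of_nonneg_right hκ (dtwCost_nonneg ..))

namespace IsSimplification

variable {α : ℝ} {ℓ m : ℕ} {τ s c : List X} {T : Finset (List X)}

theorem dtw_le_of_seqLE (hs : IsSimplification p α ℓ τ s) (hp : 1 ≤ p) (hc : SeqLE ℓ c) :
    dtw p s c ≤ (ℓ : ℝ) ^ (1 / p) * ((α + 1) * dtw p c τ) :=
  calc dtw p s c
      ≤ (ℓ : ℝ) ^ (1 / p) * dtw p s τ + (ℓ : ℝ) ^ (1 / p) * dtw p τ c :=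
        dtw_le_add_of_seqLE hp hs.1 hc τ
    _ = (ℓ : ℝ) ^ (1 / p) * (dtw p τ s + dtw p τ c) := by rw [dtw_comm p s τ, mul_add]
    _ ≤ (ℓ : ℝ) ^ (1 / p) * (α * dtw p τ c + dtw p τ c) := by gcongr; exact hs.2 c hc
    _ = (ℓ : ℝ) ^ (1 / p) * ((α + 1) * dtw p c τ) := by rw [dtw_comm p c τ, add_one_mul]

theorem dtwCost_le (hs : IsSimplification p α ℓ τ s) (hp : 1 ≤ p) (hα : 0 ≤ α)
    (hT : ∀ υ ∈ T, SeqLE m υ) (hc : SeqLE ℓ c) (hτ : #T * dtw p c τ ≤ 2 * dtwCost p 1 T c) :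
    dtwCost p 1 T s ≤
      (2 * α + 3) * (m : ℝ) ^ (1 / p) * (ℓ : ℝ) ^ (1 / p) * dtwCost p 1 T c := by
  obtain rfl | ⟨υ₀, hυ₀⟩ := T.eq_empty_or_nonempty
  · simp [dtwCost]
  set M := (m : ℝ) ^ (1 / p)
  set L := (ℓ : ℝ) ^ (1 / p)
  have hM : 1 ≤ M :=
    Real.one_le_rpow (by exact_mod_cast one_le_two.trans ((hT υ₀ hυ₀).1.trans (hT υ₀ hυ₀).2))
      (by positivity)
  have hcost := dtwCost_nonneg p 1 T c
  calc dtwCost p 1 T s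
      = ∑ υ ∈ T, dtw p s υ := dtwCost_one ..
    _ ≤ ∑ υ ∈ T, (M * (L * ((α + 1) * dtw p c τ)) + L * dtw p c υ) := by
        refine Finset.sum_le_sum fun υ hυ => (dtw_le_add_of_seqLE hp hs.1 (hT υ hυ) c).trans ?_
        gcongr
        exact hs.dtw_le_of_seqLE hp hc
    _ = M * L * (α + 1) * (#T * dtw p c τ) + L * dtwCost p 1 T c := by
        rw [Finset.sum_add_distrib, Finset.sum_const, nsmul_eq_mul, ← Finset.mul_sum,
          ← dtwCost_one]
        ring
    _ ≤ M * L * (α + 1) * (2 * dtwCost p 1 T c) + M * L * dtwCost p 1 T c := by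
        gcongr
        exact le_mul_of_one_le_left (by positivity) hM
    _ = (2 * α + 3) * M * L * dtwCost p 1 T c := by ring

end IsSimplification

theorem card_le_two_mul_card_isApproxMedian {α : ℝ} (hp : 1 ≤ p) (hα : 0 ≤ α) {m ℓ : ℕ}
    {T : Finset (List X)} (hT : ∀ τ ∈ T, SeqLE m τ) {simp : List X → List X}
    (hsimp : ∀ τ ∈ T, IsSimplification p α ℓ τ (simp τ)) :
    #T ≤ 2 * {τ | τ ∈ T ∧ IsApproxMedian p ℓ T
      ((2 * α + 3) * (m : ℝ) ^ (1 / p) * (ℓ : ℝ) ^ (1 / p)) (simp τ)}.ncard := by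
  classical
  set κ := (2 * α + 3) * (m : ℝ) ^ (1 / p) * (ℓ : ℝ) ^ (1 / p)
  rw [← Finset.coe_filter, Set.ncard_coe_finset]
  by_cases hgood : {τ ∈ T | IsApproxMedian p ℓ T κ (simp τ)} = T
  · rw [hgood]
    lia
  obtain ⟨c, hc, hsub⟩ := exists_filter_subset_filter_forall T (fun τ => dtwCost p 1 T (simp τ))
    {c | SeqLE ℓ c} (fun c => κ * dtwCost p 1 T c) hgood
  have hclose : {τ ∈ T | #T * dtw p c τ ≤ 2 * ∑ υ ∈ T, dtw p c υ} ⊆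
      {τ ∈ T | dtwCost p 1 T (simp τ) ≤ κ * dtwCost p 1 T c} :=
    Finset.monotone_filter_right T fun τ hτ h =>
      (hsimp τ hτ).dtwCost_le hp hα hT hc (by rwa [dtwCost_one])
  calc #T ≤ 2 * #{τ ∈ T | #T * dtw p c τ ≤ 2 * ∑ υ ∈ T, dtw p c υ} :=
        card_le_two_mul_card_filter_le fun τ _ => dtw_nonneg p c τ
    _ ≤ 2 * #{τ ∈ T | IsApproxMedian p ℓ T κ (simp τ)} :=
        Nat.mul_le_mul_left 2 (Finset.card_le_card (hclose.trans hsub))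

end DynamicTimeWarping

theorem clustering_candidates_median_factor_general {X ι : Type*} [MetricSpace X] [Inhabited X]
    [Fintype ι] [DecidableEq ι] {T T' : Finset (List X)} (hT'T : T' ⊆ T) {m ℓ : ℕ}
    (hm : ∀ τ ∈ T', SeqLE m τ) {β p δ α : ℝ} (hβ : 0 < β)
    (hcard : (#T : ℝ) / β ≤ #T') (hp : 1 ≤ p) (hδ : 0 < δ)
    (hι : 2 * β * Real.log δ⁻¹ ≤ Fintype.card ι) (hα : 0 ≤ α) {simp : List X → List X}
    (hsimp : ∀ τ ∈ T', IsSimplification p α ℓ τ (simp τ)) :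
    (1 - δ) * (Fintype.card (ι → {τ // τ ∈ T}) : ℝ) ≤
      Nat.card {s : ι → {τ // τ ∈ T} | ∃ i, IsApproxMedian p ℓ T'
        ((2 * α + 3) * (m : ℝ) ^ (1 / p) * (ℓ : ℝ) ^ (1 / p)) (simp (s i))} := by
  set κ := (2 * α + 3) * (m : ℝ) ^ (1 / p) * (ℓ : ℝ) ^ (1 / p)
  let A : Set {τ // τ ∈ T} := {τ | IsApproxMedian p ℓ T' κ (simp τ)}
  have hsub : {τ | τ ∈ T' ∧ IsApproxMedian p ℓ T' κ (simp τ)} ⊆ Subtype.val '' A :=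
    fun τ hτ => ⟨⟨τ, hT'T hτ.1⟩, hτ.2, rfl⟩
  have hhalf : #T' ≤ 2 * A.ncard :=
    calc #T' ≤ 2 * {τ | τ ∈ T' ∧ IsApproxMedian p ℓ T' κ (simp τ)}.ncard :=
          card_le_two_mul_card_isApproxMedian hp hα hm hsimp
      _ ≤ 2 * (Subtype.val '' A).ncard := by gcongr; exact Set.toFinite _
      _ = 2 * A.ncard := by rw [Set.ncard_image_of_injective A Subtype.val_injective]
  have hA : 1 / (2 * β) * Nat.card {τ // τ ∈ T} ≤ A.ncard := by
    rw [Nat.card_eq_fintype_card, Fintype.card_coe, one_div_mul_eq_div, mul_comm, ← div_div,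
      div_le_iff₀ two_pos, mul_comm]
    exact hcard.trans (by exact_mod_cast hhalf)
  have hexp : Real.exp (-(1 / (2 * β) * Nat.card ι)) ≤ δ := by
    rw [← Real.le_log_iff_exp_le hδ, neg_le, ← Real.log_inv, Nat.card_eq_fintype_card,
      one_div_mul_eq_div, le_div_iff₀ (by positivity), mul_comm]
    exact hι
  calc (1 - δ) * (Fintype.card (ι → {τ // τ ∈ T}) : ℝ)
      ≤ (1 - Real.exp (-(1 / (2 * β) * Nat.card ι))) *
          (Nat.card {τ // τ ∈ T} : ℝ) ^ Nat.card ι := by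
        rw [← Nat.card_eq_fintype_card, Nat.card_fun, Nat.cast_pow]
        gcongr
    _ ≤ {s : ι → {τ // τ ∈ T} | ∃ i, s i ∈ A}.ncard := one_sub_exp_mul_card_pow_le_ncard hA

/-- **Sampled simplifications give approximate medians for every large subset**
(Lemma `lemma:kmedians_roughapprox`, clustering candidates with `O((mℓ)^{1/p})` factor):
for a fixed `T' ⊆ T` with `|T'| ≥ |T|/β`, sampling `⌈2β·log₂(2/δ)⌉` sequences from `T`
uniformly and independently with replacement and taking their fixed `(2,ℓ)`-simplifications,
with probability at least `1-δ` some sampled sequence `τ` has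
`cost_p^1(T', τ') ≤ 8 m^{1/p} ℓ^{1/p} · min_{c ∈ X^{≤ℓ}} cost_p^1(T',c)`, where `τ'` is
its simplification. -/
theorem clustering_candidates_median_factor {X : Type*} [MetricSpace X] [Inhabited X]
    (T : Finset (List X)) (hT : T.Nonempty) (n m ℓ : ℕ) (hn : T.card = n)
    (hm : ∀ τ ∈ T, 2 ≤ τ.length ∧ τ.length ≤ m)
    (hℓ2 : 2 ≤ ℓ) (hℓm : ℓ ≤ m)
    (β : ℝ) (hβ : 1 < β) (p : ℝ) (hp : 1 ≤ p) (δ : ℝ) (hδ0 : 0 < δ) (hδ1 : δ < 1)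
    (simp : List X → List X)
    (hsimp : ∀ τ ∈ T, SeqLE ℓ (simp τ) ∧
      ∀ π' : List X, SeqLE ℓ π' → dtw p τ (simp τ) ≤ 2 * dtw p τ π')
    (T' : Finset (List X)) (hT'sub : T' ⊆ T) (hT'card : (T.card : ℝ) / β ≤ (T'.card : ℝ)) :
    (1 - δ) *
        (Fintype.card
          (Fin ⌈2 * β * Real.logb 2 (2 / δ)⌉₊ → {τ // τ ∈ T}) : ℝ) ≤
      (Nat.card
        {s : Fin ⌈2 * β * Real.logb 2 (2 / δ)⌉₊ → {τ // τ ∈ T} |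
          ∃ i, ∀ c : List X, SeqLE ℓ c →
            dtwCost p 1 T' (simp ((s i : List X))) ≤
              8 * (m : ℝ) ^ (1 / p) * (ℓ : ℝ) ^ (1 / p) * dtwCost p 1 T' c} : ℝ) := by
  have hN : 2 * β * Real.log δ⁻¹ ≤ Fintype.card (Fin ⌈2 * β * Real.logb 2 (2 / δ)⌉₊) := by
    rw [Fintype.card_fin]
    refine le_trans ?_ (Nat.le_ceil _)
    gcongr
    exact log_inv_le_logb_two_div hδ0 hδ1.le
  have hgeneral := clustering_candidates_median_factor_general hT'sub
    (fun τ hτ => hm τ (hT'sub hτ)) (by positivity) hT'card hp hδ0 hN zero_le_two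
    fun τ hτ => hsimp τ (hT'sub hτ)
  refine hgeneral.trans (Nat.cast_le.2 (Nat.card_mono (Set.toFinite _) ?_))
  rintro s ⟨i, hi⟩
  exact ⟨i, hi.mono (by gcongr; norm_num)⟩
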